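/- Assume additionally that θ ↦ f(φ,θ) is concave for every φ (∂²f/∂θ² ≤ 0) and that G is convex, and suppose the full discrete scheme (D1)–(D5) holds (with (D3) the discrete entropy equation). Then the discrete total energy is nonincreasing up to the sources: (1/τ) [∫_Ω (e^{n+1} + ½|u^{n+1}|²) dx − ∫_Ω (eⁿ + ½|uⁿ|²) dx] ≤ ∫_Ω Qⁿ dx + ∫_Ω bⁿ·u^{n+1} dx; equivalently, equality holds up to a nonpositive numerical dissipation term coming from the concavity of f in θ, the convexity of G, and the kinetic-energy term −(τ/2)∫_Ω |(u^{n+1} − uⁿ)/τ|² dx. -/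

import Mathlib

/-!
Test the phase equation with `ψ = μⁿ⁺¹`, the equation for the chemical potential with
`ξ = (φⁿ⁺¹ - φⁿ)/τ`, the entropy equation with `ω = θⁿ⁺¹`, the momentum equation with `v = uⁿ⁺¹` and
the incompressibility constraint with `q = pⁿ⁺¹`. The heat-flux and skew-symmetric convection terms
vanish identically, the mobility, viscosity and pressure terms cancel between the equations, and so
do all terms containing `∇G(∇φⁿ)` or `sⁿ`; only the sources remain on the right. The discrete time
derivative of the velocity is handled by `(|a|² - |b|²)/2 ≤ (a - b) · a`.

The other ingredient is pointwise (`energy_step_le`). Since `s = -G(∇φ) - ∂_θ f`,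
`eⁿ⁺¹ - eⁿ = θⁿ⁺¹ (sⁿ⁺¹ - sⁿ) + θⁿ⁺¹ (Gⁿ⁺¹ - Gⁿ) + f(φⁿ⁺¹, θⁿ⁺¹) - f(φⁿ, θⁿ⁺¹)
  + [f(φⁿ, θⁿ⁺¹) - f(φⁿ, θⁿ) - ∂_θ f(φⁿ, θⁿ) (θⁿ⁺¹ - θⁿ)]`.
Concavity makes the bracket nonpositive, convexity bounds `Gⁿ⁺¹ - Gⁿ` by
`∇G(∇φⁿ⁺¹) · (∇φⁿ⁺¹ - ∇φⁿ)`, and the difference of `f` in its first argument is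
`f̄_φ (φⁿ⁺¹ - φⁿ)` by the fundamental theorem of calculus (`fbar_mul_sub`).

The gradients of Lipschitz functions exist almost everywhere by Rademacher's theorem. All integrands
are measurable and bounded on the box (`BddMeas`), so every integral can be split freely.
-/

open MeasureTheory

noncomputable section

/-- `i`-th spatial partial derivative of a scalar field. -/
def pd {d : ℕ} (i : Fin d) (g : (Fin d → ℝ) → ℝ) (x : Fin d → ℝ) : ℝ :=
  fderiv ℝ g x (Pi.single i 1)

/-- Spatial gradient of a scalar field. -/
def grad {d : ℕ} (g : (Fin d → ℝ) → ℝ) (x : Fin d → ℝ) : Fin d → ℝ :=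
  fun i => pd i g x

/-- Divergence of a vector field. -/
def divg {d : ℕ} (u : (Fin d → ℝ) → Fin d → ℝ) (x : Fin d → ℝ) : ℝ :=
  ∑ i, pd i (fun y => u y i) x

/-- Euclidean dot product. -/
def dot {d : ℕ} (a b : Fin d → ℝ) : ℝ := ∑ i, a i * b i

/-- Time derivative of a time-dependent scalar field. -/
def dt {d : ℕ} (g : ℝ → (Fin d → ℝ) → ℝ) (t : ℝ) (x : Fin d → ℝ) : ℝ :=
  deriv (fun s => g s x) t

/-- The box `Ω = [0, L₁] × ⋯ × [0, L_d]`. -/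
def box {d : ℕ} (L : Fin d → ℝ) : Set (Fin d → ℝ) :=
  Set.univ.pi fun i => Set.Icc 0 (L i)

/-- Spatial periodicity with periods `L`. -/
def SpacePeriodic {d : ℕ} (L : Fin d → ℝ) (g : (Fin d → ℝ) → ℝ) : Prop :=
  ∀ x i, g (x + Pi.single i (L i)) = g x

/-- Entropy density `s = -G(∇φ) - ∂_θ f(φ, θ)`. -/
def entS {d : ℕ} (G : (Fin d → ℝ) → ℝ) (f : ℝ → ℝ → ℝ)
    (φ θ : ℝ → (Fin d → ℝ) → ℝ) (t : ℝ) (x : Fin d → ℝ) : ℝ :=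
  -G (grad (φ t) x) - deriv (f (φ t x)) (θ t x)

/-- Internal energy density `e = f(φ, θ) - θ ∂_θ f(φ, θ)`. -/
def intE {d : ℕ} (f : ℝ → ℝ → ℝ) (φ θ : ℝ → (Fin d → ℝ) → ℝ)
    (t : ℝ) (x : Fin d → ℝ) : ℝ :=
  f (φ t x) (θ t x) - θ t x * deriv (f (φ t x)) (θ t x)

/-- Total energy density `e_tot = e + |u|²/2`. -/
def totE {d : ℕ} (f : ℝ → ℝ → ℝ) (φ θ : ℝ → (Fin d → ℝ) → ℝ)
    (u : ℝ → (Fin d → ℝ) → Fin d → ℝ) (t : ℝ) (x : Fin d → ℝ) : ℝ :=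
  intE f φ θ t x + (1 / 2) * ∑ i, (u t x i) ^ 2

/-- Chemical potential `μ = -θ div(∇G(∇φ)) + ∂_φ f(φ, θ)`. -/
def chemMu {d : ℕ} (G : (Fin d → ℝ) → ℝ) (f : ℝ → ℝ → ℝ)
    (φ θ : ℝ → (Fin d → ℝ) → ℝ) (t : ℝ) (x : Fin d → ℝ) : ℝ :=
  -θ t x * divg (fun y => grad G (grad (φ t) y)) x
    + deriv (fun a => f a (θ t x)) (φ t x)

/-- Korteweg stress `σ̃ᵢⱼ = θ (∇G(∇φ))ᵢ ∂ⱼφ`. -/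
def korteweg {d : ℕ} (G : (Fin d → ℝ) → ℝ)
    (φ θ : ℝ → (Fin d → ℝ) → ℝ) (t : ℝ) (x : Fin d → ℝ) (i j : Fin d) : ℝ :=
  θ t x * grad G (grad (φ t) x) i * pd j (φ t) x

/-- Symmetric gradient `Dw = (∇w + (∇w)ᵀ)/2` of a (spatial) vector field. -/
def symGrad {d : ℕ} (w : (Fin d → ℝ) → Fin d → ℝ) (x : Fin d → ℝ) (i j : Fin d) : ℝ :=
  (pd i (fun y => w y j) x + pd j (fun y => w y i) x) / 2

/-- Entropy density at a discrete time level. -/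
def sdisc {d : ℕ} (G : (Fin d → ℝ) → ℝ) (f : ℝ → ℝ → ℝ)
    (φ θ : (Fin d → ℝ) → ℝ) (x : Fin d → ℝ) : ℝ :=
  -G (grad φ x) - deriv (f (φ x)) (θ x)

/-- Internal energy density at a discrete time level. -/
def ediscr {d : ℕ} (f : ℝ → ℝ → ℝ) (φ θ : (Fin d → ℝ) → ℝ) (x : Fin d → ℝ) : ℝ :=
  f (φ x) (θ x) - θ x * deriv (f (φ x)) (θ x)

/-- Averaged derivative `f̄_φ(x) = ∫₀¹ ∂_φ f(φⁿ + r(φⁿ⁺¹ - φⁿ), θⁿ⁺¹) dr`. -/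
def fbar {d : ℕ} (f : ℝ → ℝ → ℝ) (φn φn1 θn1 : (Fin d → ℝ) → ℝ) (x : Fin d → ℝ) : ℝ :=
  ∫ r in (0 : ℝ)..1, deriv (fun a => f a (θn1 x)) (φn x + r * (φn1 x - φn x))

/-! ### Bounded measurable functions on the box -/

/-- Measurable on the whole space and bounded on the box `Ω`: the class in which all the integrands
of the scheme lie, closed under sums and products and contained in `L¹(Ω)`. -/
def BddMeas {d : ℕ} (L : Fin d → ℝ) (g : (Fin d → ℝ) → ℝ) : Prop :=
  Measurable g ∧ ∃ C, ∀ x ∈ box L, |g x| ≤ C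

namespace BddMeas

variable {d : ℕ} {L : Fin d → ℝ} {g h : (Fin d → ℝ) → ℝ}

theorem isCompact_box (L : Fin d → ℝ) : IsCompact (box L) :=
  isCompact_univ_pi fun _ => isCompact_Icc

theorem integrableOn (hg : BddMeas L g) : IntegrableOn g (box L) := by
  obtain ⟨hm, C, hC⟩ := hg
  refine Measure.integrableOn_of_bounded (isCompact_box L).measure_lt_top.ne
    hm.aestronglyMeasurable (M := C) ?_
  exact (ae_restrict_iff' (isCompact_box L).measurableSet).2 (.of_forall hC)

theorem of_continuous (hg : Continuous g) : BddMeas L g := by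
  refine ⟨hg.measurable, ?_⟩
  obtain ⟨C, hC⟩ := (isCompact_box L).exists_bound_of_continuousOn hg.continuousOn
  exact ⟨C, hC⟩

theorem add (hg : BddMeas L g) (hh : BddMeas L h) : BddMeas L fun x => g x + h x := by
  obtain ⟨hm, C, hC⟩ := hg
  obtain ⟨hm', C', hC'⟩ := hh
  exact ⟨hm.add hm', C + C', fun x hx =>
    (abs_add_le _ _).trans (add_le_add (hC x hx) (hC' x hx))⟩

theorem mul (hg : BddMeas L g) (hh : BddMeas L h) : BddMeas L fun x => g x * h x := by
  obtain ⟨hm, C, hC⟩ := hg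
  obtain ⟨hm', C', hC'⟩ := hh
  refine ⟨hm.mul hm', C * C', fun x hx => ?_⟩
  rw [abs_mul]
  exact mul_le_mul (hC x hx) (hC' x hx) (abs_nonneg _) ((abs_nonneg _).trans (hC x hx))

theorem const (c : ℝ) : BddMeas L fun _ => c := of_continuous continuous_const

theorem sub (hg : BddMeas L g) (hh : BddMeas L h) : BddMeas L fun x => g x - h x := by
  convert hg.add ((const (-1)).mul hh) using 2
  ring

theorem div_const (hg : BddMeas L g) (c : ℝ) : BddMeas L fun x => g x / c := by
  simpa only [div_eq_mul_inv] using hg.mul (const c⁻¹)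

theorem sum {g : Fin d → (Fin d → ℝ) → ℝ} (hg : ∀ i, BddMeas L (g i)) :
    BddMeas L fun x => ∑ i, g i x := by
  choose hm C hC using hg
  exact ⟨Finset.measurable_sum _ fun i _ => hm i, ∑ i, C i, fun x hx =>
    (Finset.abs_sum_le_sum_abs _ _).trans (Finset.sum_le_sum fun i _ => hC i x hx)⟩

theorem dot {v w : (Fin d → ℝ) → Fin d → ℝ} (hv : ∀ i, BddMeas L fun x => v x i)
    (hw : ∀ i, BddMeas L fun x => w x i) : BddMeas L fun x => dot (v x) (w x) :=
  sum fun i => (hv i).mul (hw i)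

theorem comp_continuous {H : (Fin d → ℝ) → ℝ} (hH : Continuous H) {v : (Fin d → ℝ) → Fin d → ℝ}
    (hv : ∀ i, BddMeas L fun x => v x i) : BddMeas L fun x => H (v x) := by
  choose hm C hC using hv
  refine ⟨hH.measurable.comp (measurable_pi_lambda _ hm), ?_⟩
  have hcpt : IsCompact (Set.univ.pi fun i => Set.Icc (-C i) (C i)) :=
    isCompact_univ_pi fun _ => isCompact_Icc
  obtain ⟨B, hB⟩ := hcpt.exists_bound_of_continuousOn hH.continuousOn
  exact ⟨B, fun x hx => hB _ fun i _ => abs_le.1 (hC i x hx)⟩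

theorem pd_of_lipschitz {C : NNReal} (hg : LipschitzWith C g) (i : Fin d) :
    BddMeas L fun x => pd i g x := by
  refine ⟨measurable_fderiv_apply_const ℝ g _, C, fun x _ => ?_⟩
  have h := (fderiv ℝ g x).le_of_opNorm_le (norm_fderiv_le_of_lipschitz ℝ hg) (Pi.single i 1)
  have h1 : ‖(Pi.single i 1 : Fin d → ℝ)‖ = 1 := by simp [Pi.norm_single]
  rwa [h1, mul_one] at h

end BddMeas

/-! ### Convexity and concavity -/

theorem fderiv_apply_eq_dot {d : ℕ} (g : (Fin d → ℝ) → ℝ) (x v : Fin d → ℝ) :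
    fderiv ℝ g x v = dot (grad g x) v := by
  have hv : v = ∑ i, v i • (Pi.single i 1 : Fin d → ℝ) := by
    ext j
    simp [Finset.sum_apply, Pi.single_apply]
  conv_lhs => rw [hv]
  simp [dot, grad, pd, mul_comm]

theorem convex_gradient_ineq {d : ℕ} {G : (Fin d → ℝ) → ℝ} (hG : ContDiff ℝ 2 G)
    (hGconv : ConvexOn ℝ Set.univ G) (a b : Fin d → ℝ) :
    G b - G a ≤ dot (grad G b) (b - a) := by
  have hline : HasDerivAt (fun t : ℝ => G (AffineMap.lineMap a b t)) (fderiv ℝ G b (b - a)) 1 := by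
    have h1 : HasDerivAt (fun t : ℝ => AffineMap.lineMap a b t) (b - a) (1 : ℝ) :=
      AffineMap.hasDerivAt_lineMap
    have h2 : HasFDerivAt G (fderiv ℝ G b) (AffineMap.lineMap a b (1 : ℝ)) := by
      simpa using (hG.differentiable (by norm_num) b).hasFDerivAt
    exact h2.comp_hasDerivAt 1 h1
  have hc : ConvexOn ℝ Set.univ (fun t : ℝ => G (AffineMap.lineMap a b t)) :=
    hGconv.comp_affineMap (AffineMap.lineMap a b)
  have h := hc.slope_le_of_hasDerivAt (Set.mem_univ 0) (Set.mem_univ 1) one_pos hline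
  rw [fderiv_apply_eq_dot] at h
  simpa [slope_def_field] using h

theorem concave_tangent_ineq {h : ℝ → ℝ} (hc : ConcaveOn ℝ (Set.Ioi 0) h) {a b : ℝ} (ha : 0 < a)
    (hb : 0 < b) (hd : DifferentiableAt ℝ h a) : h b - h a ≤ deriv h a * (b - a) := by
  rcases lt_trichotomy a b with hab | rfl | hab
  · have := hc.slope_le_of_hasDerivAt ha hb hab hd.hasDerivAt
    rwa [slope_def_field, div_le_iff₀ (sub_pos.2 hab)] at this
  · simp
  · have := hc.le_slope_of_hasDerivAt hb ha hab hd.hasDerivAt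
    rw [slope_def_field, le_div_iff₀ (sub_pos.2 hab)] at this
    linarith

/-! ### The free energy and the pointwise energy balance -/

section FreeEnergy

variable {f : ℝ → ℝ → ℝ}

theorem hasFDerivAt_free (hf : ContDiffOn ℝ 2 (fun q : ℝ × ℝ => f q.1 q.2) (Set.univ ×ˢ Set.Ioi 0))
    (a : ℝ) {b : ℝ} (hb : 0 < b) :
    HasFDerivAt (fun q : ℝ × ℝ => f q.1 q.2) (fderiv ℝ (fun q : ℝ × ℝ => f q.1 q.2) (a, b))
      (a, b) :=
  ((hf.contDiffAt ((isOpen_univ.prod isOpen_Ioi).mem_nhds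
    (Set.mk_mem_prod (Set.mem_univ a) (Set.mem_Ioi.2 hb)))).differentiableAt
    (by norm_num)).hasFDerivAt

theorem hasDerivAt_free_snd
    (hf : ContDiffOn ℝ 2 (fun q : ℝ × ℝ => f q.1 q.2) (Set.univ ×ˢ Set.Ioi 0))
    (a : ℝ) {b : ℝ} (hb : 0 < b) :
    HasDerivAt (f a) (fderiv ℝ (fun q : ℝ × ℝ => f q.1 q.2) (a, b) (0, 1)) b :=
  (hasFDerivAt_free hf a hb).comp_hasDerivAt b ((hasDerivAt_const b a).prodMk (hasDerivAt_id b))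

theorem hasDerivAt_free_fst
    (hf : ContDiffOn ℝ 2 (fun q : ℝ × ℝ => f q.1 q.2) (Set.univ ×ˢ Set.Ioi 0))
    (a : ℝ) {b : ℝ} (hb : 0 < b) :
    HasDerivAt (fun a => f a b) (fderiv ℝ (fun q : ℝ × ℝ => f q.1 q.2) (a, b) (1, 0)) a :=
  (hasFDerivAt_free hf a hb).comp_hasDerivAt (f := fun a => (a, b)) a
    ((hasDerivAt_id a).prodMk (hasDerivAt_const a b))

theorem continuous_fderiv_free
    (hf : ContDiffOn ℝ 2 (fun q : ℝ × ℝ => f q.1 q.2) (Set.univ ×ˢ Set.Ioi 0))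
    {α : Type*} [TopologicalSpace α] {g h : α → ℝ} (hg : Continuous g) (hh : Continuous h)
    (hpos : ∀ x, 0 < h x) (v : ℝ × ℝ) :
    Continuous fun x => fderiv ℝ (fun q : ℝ × ℝ => f q.1 q.2) (g x, h x) v :=
  ((hf.continuousOn_fderiv_of_isOpen (isOpen_univ.prod isOpen_Ioi) (by norm_num)).comp_continuous
    (hg.prodMk hh) fun x => ⟨trivial, hpos x⟩).clm_apply continuous_const

theorem continuous_free
    (hf : ContDiffOn ℝ 2 (fun q : ℝ × ℝ => f q.1 q.2) (Set.univ ×ˢ Set.Ioi 0))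
    {α : Type*} [TopologicalSpace α] {g h : α → ℝ} (hg : Continuous g) (hh : Continuous h)
    (hpos : ∀ x, 0 < h x) : Continuous fun x => f (g x) (h x) :=
  hf.continuousOn.comp_continuous (hg.prodMk hh) fun x => ⟨trivial, hpos x⟩

theorem continuous_deriv_free
    (hf : ContDiffOn ℝ 2 (fun q : ℝ × ℝ => f q.1 q.2) (Set.univ ×ˢ Set.Ioi 0))
    {α : Type*} [TopologicalSpace α] {g h : α → ℝ} (hg : Continuous g) (hh : Continuous h)
    (hpos : ∀ x, 0 < h x) : Continuous fun x => deriv (f (g x)) (h x) := by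
  convert continuous_fderiv_free hf hg hh hpos (0, 1) using 2 with x
  exact (hasDerivAt_free_snd hf _ (hpos x)).deriv

/-- The averaged derivative is the difference quotient of `f(·, θⁿ⁺¹)`. -/
theorem fbar_mul_sub {d : ℕ}
    (hf : ContDiffOn ℝ 2 (fun q : ℝ × ℝ => f q.1 q.2) (Set.univ ×ˢ Set.Ioi 0))
    {φ ψ θ : (Fin d → ℝ) → ℝ} (hθ : ∀ x, 0 < θ x) (x : Fin d → ℝ) :
    fbar f φ ψ θ x * (ψ x - φ x) = f (ψ x) (θ x) - f (φ x) (θ x) := by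
  have hder : ∀ r : ℝ, HasDerivAt (fun r => f (φ x + r * (ψ x - φ x)) (θ x))
      (deriv (fun a => f a (θ x)) (φ x + r * (ψ x - φ x)) * (ψ x - φ x)) r := by
    intro r
    have h1 : HasDerivAt (fun r : ℝ => φ x + r * (ψ x - φ x)) (ψ x - φ x) r := by
      simpa using ((hasDerivAt_id r).mul_const (ψ x - φ x)).const_add (φ x)
    exact (hasDerivAt_free_fst hf _ (hθ x)).differentiableAt.hasDerivAt.comp r h1
  have hcont : Continuous fun r : ℝ => deriv (fun a => f a (θ x)) (φ x + r * (ψ x - φ x)) := by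
    convert continuous_fderiv_free hf (g := fun r : ℝ => φ x + r * (ψ x - φ x))
      (h := fun _ => θ x) (by fun_prop) continuous_const (fun _ => hθ x) (1, 0) using 2 with r
    exact (hasDerivAt_free_fst hf _ (hθ x)).deriv
  rw [fbar, ← intervalIntegral.integral_mul_const,
    intervalIntegral.integral_eq_sub_of_hasDerivAt (fun r _ => hder r)
      ((hcont.mul continuous_const).intervalIntegrable _ _)]
  simp

/-- Pointwise energy balance of one time step, with the dissipation from the concavity of `f` and
the convexity of `G` discarded. -/
theorem energy_step_le {d : ℕ} {G : (Fin d → ℝ) → ℝ} (hG : ContDiff ℝ 2 G)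
    (hGconv : ConvexOn ℝ Set.univ G)
    (hf : ContDiffOn ℝ 2 (fun q : ℝ × ℝ => f q.1 q.2) (Set.univ ×ˢ Set.Ioi 0))
    (hfconc : ∀ a : ℝ, ConcaveOn ℝ (Set.Ioi 0) (f a))
    {φ θ φ' θ' : (Fin d → ℝ) → ℝ} (hθ : ∀ x, 0 < θ x) (hθ' : ∀ x, 0 < θ' x) (x : Fin d → ℝ) :
    ediscr f φ' θ' x - ediscr f φ θ x
      ≤ (sdisc G f φ' θ' x - sdisc G f φ θ x) * θ' x
        + θ' x * dot (grad G (grad φ' x)) (grad φ' x - grad φ x)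
        + fbar f φ φ' θ' x * (φ' x - φ x) := by
  have h1 := mul_le_mul_of_nonneg_left (convex_gradient_ineq hG hGconv (grad φ x) (grad φ' x))
    (hθ' x).le
  have h2 := concave_tangent_ineq (hfconc (φ x)) (hθ x) (hθ' x)
    (hasDerivAt_free_snd hf _ (hθ x)).differentiableAt
  rw [fbar_mul_sub hf hθ']
  simp only [ediscr, sdisc]
  linarith

end FreeEnergy

theorem grad_div_sub {d : ℕ} {g h : (Fin d → ℝ) → ℝ} {x : Fin d → ℝ}
    (hg : DifferentiableAt ℝ g x) (hh : DifferentiableAt ℝ h x) (τ : ℝ) :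
    grad (fun y => (g y - h y) / τ) x = τ⁻¹ • (grad g x - grad h x) := by
  ext i
  have : fderiv ℝ (fun y => (g y - h y) / τ) x = τ⁻¹ • (fderiv ℝ g x - fderiv ℝ h x) := by
    simp only [div_eq_inv_mul]
    exact ((hg.hasFDerivAt.sub hh.hasFDerivAt).const_mul τ⁻¹).fderiv
  simp [grad, pd, this]

theorem dot_smul_right {d : ℕ} (a b : Fin d → ℝ) (c : ℝ) : dot a (c • b) = c * dot a b := by
  simp [dot, Finset.mul_sum, mul_left_comm]

/-! ### The discrete energy inequality -/

/-- discrete total-energy inequality for the full scheme (D1)-(D5). -/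
theorem discrete_total_energy_dissipation
    {d : ℕ} (hd : d = 1 ∨ d = 2 ∨ d = 3)
    (L : Fin d → ℝ) (hL : ∀ i, 0 < L i)
    (G : (Fin d → ℝ) → ℝ) (hG : ContDiff ℝ 2 G)
    (hGconv : ConvexOn ℝ Set.univ G)
    (f : ℝ → ℝ → ℝ)
    (hf : ContDiffOn ℝ 2 (fun q : ℝ × ℝ => f q.1 q.2) (Set.univ ×ˢ Set.Ioi 0))
    (hfconc : ∀ a : ℝ, ConcaveOn ℝ (Set.Ioi 0) (f a))
    (M K η : ℝ → ℝ → ℝ)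
    (hM : Continuous fun q : ℝ × ℝ => M q.1 q.2) (hMpos : ∀ a b, 0 < M a b)
    (hK : Continuous fun q : ℝ × ℝ => K q.1 q.2) (hKpos : ∀ a b, 0 < K a b)
    (hη : Continuous fun q : ℝ × ℝ => η q.1 q.2) (hηpos : ∀ a b, 0 < η a b)
    (V : Submodule ℝ ((Fin d → ℝ) → ℝ)) (hVfin : FiniteDimensional ℝ V)
    (hVlip : ∀ g ∈ V, ∃ C : NNReal, LipschitzWith C g)
    (hVper : ∀ g ∈ V, SpacePeriodic L g)
    (hVone : (fun _ => (1 : ℝ)) ∈ V)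
    (X : Submodule ℝ ((Fin d → ℝ) → Fin d → ℝ)) (hXfin : FiniteDimensional ℝ X)
    (hXlip : ∀ w ∈ X, ∃ C : NNReal, LipschitzWith C w)
    (hXper : ∀ w ∈ X, ∀ j, SpacePeriodic L fun x => w x j)
    (P : Set ((Fin d → ℝ) → ℝ))
    (hP : ∀ q ∈ P, q ∈ V ∧ (∫ x in box L, q x) = 0)
    (τ : ℝ) (hτ : 0 < τ)
    (φn θn φn1 μn1 θn1 : (Fin d → ℝ) → ℝ)
    (hφn : φn ∈ V) (hθn : θn ∈ V) (hφn1 : φn1 ∈ V) (hμn1 : μn1 ∈ V) (hθn1 : θn1 ∈ V)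
    (hθnpos : ∀ x, 0 < θn x) (hθn1pos : ∀ x, 0 < θn1 x)
    (un un1 : (Fin d → ℝ) → Fin d → ℝ) (hun : un ∈ X) (hun1 : un1 ∈ X)
    (pn1 : (Fin d → ℝ) → ℝ) (hpn1 : pn1 ∈ P)
    (Qn : (Fin d → ℝ) → ℝ) (hQnmeas : Measurable Qn) (hQnbdd : ∃ C, ∀ x, |Qn x| ≤ C)
    (bn : (Fin d → ℝ) → Fin d → ℝ) (hbnmeas : Measurable bn)
    (hbnbdd : ∃ C, ∀ x j, |bn x j| ≤ C)
    -- (D1)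
    (hD1 : ∀ ψ ∈ V,
      (∫ x in box L, (φn1 x - φn x) / τ * ψ x)
        = -(∫ x in box L, dot (un1 x) (grad φn x) * ψ x)
          - ∫ x in box L, M (φn x) (θn x) / θn x * μn1 x * ψ x)
    -- (D2)
    (hD2 : ∀ ξ ∈ V,
      (∫ x in box L, μn1 x * ξ x)
        = (∫ x in box L, θn1 x * dot (grad G (grad φn1 x)) (grad ξ x))
          + (∫ x in box L, ξ x * dot (grad G (grad φn x)) (grad θn1 x))
          + ∫ x in box L, fbar f φn φn1 θn1 x * ξ x)
    -- (D3): the discrete entropy equation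
    (hD3 : ∀ ω ∈ V,
      (∫ x in box L, (sdisc G f φn1 θn1 x - sdisc G f φn θn x) / τ * ω x)
        = (∫ x in box L,
            M (φn x) (θn x) / (θn x * θn1 x) * (μn1 x) ^ 2 * ω x)
          + (∫ x in box L,
              η (φn x) (θn x) / θn1 x * (∑ i, ∑ j, (symGrad un1 x i j) ^ 2) * ω x)
          + (∫ x in box L, K (φn x) (θn x) / (θn x) ^ 2 *
              ∑ i, pd i θn1 x *
                (ω x / (θn1 x * θn x) * pd i θn1 x - (θn x)⁻¹ * pd i ω x))
          + (∫ x in box L, Qn x * ω x / θn1 x)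
          + ∫ x in box L, ∑ i,
              (grad G (grad φn x) i * ((φn1 x - φn x) / τ)
                + grad G (grad φn x) i * dot (grad φn x) (un1 x)
                + sdisc G f φn θn x * un1 x i) * pd i ω x)
    -- (D4)
    (hD4 : ∀ v ∈ X,
      (∫ x in box L, ∑ j, (un1 x j - un x j) / τ * v x j)
          + ((1 / 2) * (∫ x in box L,
                ∑ j, (∑ i, un x i * pd i (fun y => un1 y j) x) * v x j)
              - (1 / 2) * ∫ x in box L,
                ∑ j, (∑ i, un x i * pd i (fun y => v y j) x) * un1 x j)
        = -(∫ x in box L, η (φn x) (θn x) *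
              ∑ i, ∑ j, symGrad un1 x i j * symGrad v x i j)
          + (∫ x in box L, pn1 x * divg v x)
          - (∫ x in box L, ∑ j,
              (dot (grad G (grad φn x)) (grad θn1 x) * pd j φn x
                + sdisc G f φn θn x * pd j θn1 x
                - μn1 x * pd j φn x) * v x j)
          + ∫ x in box L, dot (bn x) (v x))
    -- (D5)
    (hD5 : ∀ q ∈ P, (∫ x in box L, divg un1 x * q x) = 0) :
    (1 / τ) * ((∫ x in box L,
          (ediscr f φn1 θn1 x + (1 / 2) * ∑ i, (un1 x i) ^ 2))
        - ∫ x in box L, (ediscr f φn θn x + (1 / 2) * ∑ i, (un x i) ^ 2))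
      ≤ (∫ x in box L, Qn x) + ∫ x in box L, dot (bn x) (un1 x) := by
  have hVc : ∀ g ∈ V, Continuous g := fun g hg => (hVlip g hg).choose_spec.continuous
  have hVb : ∀ g ∈ V, BddMeas L g := fun g hg => .of_continuous (hVc g hg)
  have hVpd : ∀ g ∈ V, ∀ i, BddMeas L fun x => pd i g x := fun g hg i =>
    .pd_of_lipschitz (hVlip g hg).choose_spec i
  have hXb : ∀ w ∈ X, ∀ j, BddMeas L fun x => w x j := fun w hw j =>
    .of_continuous ((continuous_apply j).comp (hXlip w hw).choose_spec.continuous)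
  have hGb : ∀ g ∈ V, ∀ i, BddMeas L fun x => grad G (grad g x) i := fun g hg i =>
    .comp_continuous (H := fun y => grad G y i)
      ((hG.continuous_fderiv (by norm_num)).clm_apply continuous_const) (hVpd g hg)
  have hsb : ∀ g ∈ V, ∀ θ ∈ V, (∀ x, 0 < θ x) → BddMeas L fun x => sdisc G f g θ x :=
    fun g hg θ hθ hpos => (BddMeas.comp_continuous (v := grad g) hG.continuous.neg
      (hVpd g hg)).sub (.of_continuous (continuous_deriv_free hf (hVc g hg) (hVc θ hθ) hpos))
  have heb : ∀ g ∈ V, ∀ θ ∈ V, (∀ x, 0 < θ x) → BddMeas L fun x => ediscr f g θ x :=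
    fun g hg θ hθ hpos => (BddMeas.of_continuous
      (continuous_free hf (hVc g hg) (hVc θ hθ) hpos)).sub ((hVb θ hθ).mul
      (.of_continuous (continuous_deriv_free hf (hVc g hg) (hVc θ hθ) hpos)))
  let ξ : (Fin d → ℝ) → ℝ := fun x => (φn1 x - φn x) / τ
  have hξ : ξ ∈ V := by
    have : ξ = τ⁻¹ • (φn1 - φn) := by
      ext x
      simp [ξ, div_eq_inv_mul]
    rw [this]
    exact V.smul_mem _ (V.sub_mem hφn1 hφn)
  have hkin : ∀ w ∈ X, BddMeas L fun x => (1 / 2) * ∑ i, (w x i) ^ 2 := fun w hw => by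
    simpa only [pow_two] using
      (BddMeas.const (1 / 2)).mul (.sum fun i => (hXb w hw i).mul (hXb w hw i))
  have hA : BddMeas L fun x => (sdisc G f φn1 θn1 x - sdisc G f φn θn x) / τ * θn1 x :=
    (((hsb _ hφn1 _ hθn1 hθn1pos).sub (hsb _ hφn _ hθn hθnpos)).div_const τ).mul (hVb _ hθn1)
  have hB : BddMeas L fun x => θn1 x * dot (grad G (grad φn1 x)) (grad ξ x) :=
    (hVb _ hθn1).mul (.dot (hGb _ hφn1) (hVpd _ hξ))
  have hC : BddMeas L fun x => fbar f φn φn1 θn1 x * ξ x := by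
    convert ((BddMeas.of_continuous (L := L)
      (continuous_free hf (hVc _ hφn1) (hVc _ hθn1) hθn1pos)).sub (.of_continuous
      (continuous_free hf (hVc _ hφn) (hVc _ hθn1) hθn1pos))).div_const τ using 2 with x
    rw [← fbar_mul_sub hf hθn1pos, mul_div_assoc]
  have hD : BddMeas L fun x => ∑ j, (un1 x j - un x j) / τ * un1 x j :=
    .sum fun j => (((hXb _ hun1 j).sub (hXb _ hun j)).div_const τ).mul (hXb _ hun1 j)
  have hE1 := (heb _ hφn1 _ hθn1 hθn1pos).add (hkin _ hun1)
  have hE0 := (heb _ hφn _ hθn hθnpos).add (hkin _ hun)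
  -- The pointwise balance, integrated; Rademacher gives linearity of the gradient in `ξ`.
  have hmain : (1 / τ) * ((∫ x in box L,
          (ediscr f φn1 θn1 x + (1 / 2) * ∑ i, (un1 x i) ^ 2))
        - ∫ x in box L, (ediscr f φn θn x + (1 / 2) * ∑ i, (un x i) ^ 2))
      ≤ (∫ x in box L, (sdisc G f φn1 θn1 x - sdisc G f φn θn x) / τ * θn1 x)
        + (∫ x in box L, θn1 x * dot (grad G (grad φn1 x)) (grad ξ x))
        + (∫ x in box L, fbar f φn φn1 θn1 x * ξ x)
        + ∫ x in box L, ∑ j, (un1 x j - un x j) / τ * un1 x j := by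
    rw [← integral_sub hE1.integrableOn hE0.integrableOn, ← integral_const_mul,
      ← integral_add hA.integrableOn hB.integrableOn,
      ← integral_add (hA.add hB).integrableOn hC.integrableOn,
      ← integral_add ((hA.add hB).add hC).integrableOn hD.integrableOn]
    refine integral_mono_ae ((BddMeas.const (1 / τ)).mul (hE1.sub hE0)).integrableOn
      (((hA.add hB).add hC).add hD).integrableOn ?_
    filter_upwards [ae_restrict_of_ae (hVlip _ hφn1).choose_spec.ae_differentiableAt,
      ae_restrict_of_ae (hVlip _ hφn).choose_spec.ae_differentiableAt] with x h1 h0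
    have hstep := mul_le_mul_of_nonneg_left
      (energy_step_le hG hGconv hf hfconc (φ := φn) (φ' := φn1) hθnpos hθn1pos x)
      (inv_nonneg.2 hτ.le)
    have hkinetic : (1 / τ) * ((1 / 2) * ∑ i, (un1 x i) ^ 2 - (1 / 2) * ∑ i, (un x i) ^ 2)
        ≤ ∑ j, (un1 x j - un x j) / τ * un1 x j := by
      rw [← mul_sub, ← Finset.sum_sub_distrib, ← mul_assoc, Finset.mul_sum]
      refine Finset.sum_le_sum fun j _ => ?_
      have := mul_nonneg (inv_nonneg.2 hτ.le) (sq_nonneg (un1 x j - un x j))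
      simp only [div_eq_mul_inv]
      linarith
    rw [grad_div_sub h1 h0, dot_smul_right]
    simp only [ξ]
    rw [one_div] at hkinetic ⊢
    simp only [div_eq_mul_inv] at hkinetic ⊢
    linarith
  -- The terms with `∇G(∇φⁿ)` and `sⁿ` of the entropy equation cancel
  -- those of the phase, potential and momentum equations.
  have hcancel : (∫ x in box L, ∑ i,
        (grad G (grad φn x) i * ((φn1 x - φn x) / τ)
          + grad G (grad φn x) i * dot (grad φn x) (un1 x)
          + sdisc G f φn θn x * un1 x i) * pd i θn1 x)
      = (∫ x in box L, ξ x * dot (grad G (grad φn x)) (grad θn1 x))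
        + (∫ x in box L, dot (un1 x) (grad φn x) * μn1 x)
        + ∫ x in box L, ∑ j,
            (dot (grad G (grad φn x)) (grad θn1 x) * pd j φn x
              + sdisc G f φn θn x * pd j θn1 x
              - μn1 x * pd j φn x) * un1 x j := by
    have hGθ : BddMeas L fun x => dot (grad G (grad φn x)) (grad θn1 x) :=
      .dot (hGb _ hφn) (hVpd _ hθn1)
    have i1 := (hVb _ hξ).mul hGθ
    have i2 : BddMeas L fun x => dot (un1 x) (grad φn x) * μn1 x :=
      (BddMeas.dot (hXb _ hun1) (hVpd _ hφn)).mul (hVb _ hμn1)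
    have i3 : BddMeas L fun x => ∑ j,
            (dot (grad G (grad φn x)) (grad θn1 x) * pd j φn x
              + sdisc G f φn θn x * pd j θn1 x
              - μn1 x * pd j φn x) * un1 x j :=
      .sum fun j => (((hGθ.mul (hVpd _ hφn j)).add
        ((hsb _ hφn _ hθn hθnpos).mul (hVpd _ hθn1 j))).sub
        ((hVb _ hμn1).mul (hVpd _ hφn j))).mul (hXb _ hun1 j)
    rw [← integral_add i1.integrableOn i2.integrableOn,
      ← integral_add (i1.add i2).integrableOn i3.integrableOn]
    congr 1
    ext x
    have e1 : ∑ i, (grad G (grad φn x) i * ((φn1 x - φn x) / τ)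
          + grad G (grad φn x) i * dot (grad φn x) (un1 x)
          + sdisc G f φn θn x * un1 x i) * pd i θn1 x
        = (ξ x + dot (grad φn x) (un1 x)) * dot (grad G (grad φn x)) (grad θn1 x)
          + sdisc G f φn θn x * dot (un1 x) (grad θn1 x) := by
      conv_rhs => rw [dot.eq_1 (grad G (grad φn x)), dot.eq_1 (un1 x)]
      rw [Finset.mul_sum, Finset.mul_sum, ← Finset.sum_add_distrib]
      refine Finset.sum_congr rfl fun i _ => ?_
      simp only [ξ, grad]
      ring
    have e2 : ∑ j, (dot (grad G (grad φn x)) (grad θn1 x) * pd j φn x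
              + sdisc G f φn θn x * pd j θn1 x
              - μn1 x * pd j φn x) * un1 x j
        = (dot (grad G (grad φn x)) (grad θn1 x) - μn1 x) * dot (un1 x) (grad φn x)
          + sdisc G f φn θn x * dot (un1 x) (grad θn1 x) := by
      rw [dot.eq_1 (un1 x) (grad φn x), dot.eq_1 (un1 x)]
      rw [Finset.mul_sum, Finset.mul_sum, ← Finset.sum_add_distrib]
      refine Finset.sum_congr rfl fun i _ => ?_
      simp only [grad]
      ring
    have e3 : dot (grad φn x) (un1 x) = dot (un1 x) (grad φn x) := by
      simp only [dot, mul_comm]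
    rw [e1, e2, e3]
    ring
  have k1 := hD1 μn1 hμn1
  have k2 := hD2 ξ hξ
  have k3 := hD3 θn1 hθn1
  have k4 := hD4 un1 hun1
  have k5 := hD5 pn1 hpn1
  have hmob : (∫ x in box L, M (φn x) (θn x) / (θn x * θn1 x) * (μn1 x) ^ 2 * θn1 x)
      = ∫ x in box L, M (φn x) (θn x) / θn x * μn1 x * μn1 x := by
    congr 1
    ext x
    have := (hθn1pos x).ne'
    have := (hθnpos x).ne'
    field_simp
  have hvisc : (∫ x in box L,
        η (φn x) (θn x) / θn1 x * (∑ i, ∑ j, (symGrad un1 x i j) ^ 2) * θn1 x)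
      = ∫ x in box L, η (φn x) (θn x) * ∑ i, ∑ j, symGrad un1 x i j * symGrad un1 x i j := by
    congr 1
    ext x
    have := (hθn1pos x).ne'
    simp only [← pow_two]
    field_simp
  have hheat : (∫ x in box L, K (φn x) (θn x) / (θn x) ^ 2 *
        ∑ i, pd i θn1 x *
          (θn1 x / (θn1 x * θn x) * pd i θn1 x - (θn x)⁻¹ * pd i θn1 x)) = 0 := by
    rw [← integral_zero (Fin d → ℝ) ℝ (μ := volume.restrict (box L))]
    congr 1
    ext x
    have h : θn1 x / (θn1 x * θn x) = (θn x)⁻¹ := by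
      have := (hθn1pos x).ne'
      have := (hθnpos x).ne'
      field_simp
    simp [h]
  have hsrc : (∫ x in box L, Qn x * θn1 x / θn1 x) = ∫ x in box L, Qn x := by
    congr 1
    ext x
    exact mul_div_cancel_right₀ _ (hθn1pos x).ne'
  have hpress : (∫ x in box L, pn1 x * divg un1 x) = 0 := by
    simpa only [mul_comm] using k5
  have hμξ : (∫ x in box L, μn1 x * ξ x) = ∫ x in box L, (φn1 x - φn x) / τ * μn1 x := by
    simp only [ξ, mul_comm]
  linarith
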